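/- For any R sufficiently large and any unit direction vector in the nonnegative orthant of ℝ^d, there exists a primitive integer vector a = (a₁,...,a_d) ∈ ℤ^d with ‖a‖ = (1-o(1))R whose angle θ with the given direction satisfies tan θ ≤ (1+o(1))√(d-1)/R. -/

import Mathlib

open Real

/-!
Round `s • u` coordinatewise, with `s ≈ R` chosen so that the coordinate `i₀` with `|u i₀|` maximal
is an exact integer: the error has norm at most `√(d - 1)`, which controls both the length and the
angle. Primitivity only concerns one further coordinate, so the point is to find coprime `m, n` with
`(1 - η) M < m ≤ M` and `|n - m t| ≤ 1`.

Dirichlet gives a reduced fraction `p / q` with `q ≤ η M` whose error `δ = p - q t` is at most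
`1 / (η M)` in absolute value; replacing `t` by `-t` we may assume `0 ≤ δ`. On the line
`p m - q n = J` coprime points recur with period `J q` in `m`, and `q |n - m t| = |m δ - J|`, so one
needs `J ≈ M δ` up to `q` and `J q ≤ η M`. Since `M δ ≤ 1 / η`, either `M δ ≤ q` and `J = 1` works,
or `q < 1 / η` and `J = ⌊M δ⌋` works.
-/

theorem exists_isCoprime_mul_sub_mul_eq {p q J : ℤ} (hpq : IsCoprime p q) (hq : 0 < q)
    (hJ : 0 < J) (M : ℝ) :
    ∃ m n : ℤ, IsCoprime m n ∧ p * m - q * n = J ∧ M - J * q < m ∧ m ≤ M := by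
  obtain ⟨x, y, hxy⟩ := hpq
  have period_pos : (0 : ℝ) < J * q := by exact_mod_cast mul_pos hJ hq
  obtain ⟨l, ⟨hlo, hhi⟩, -⟩ :=
    existsUnique_add_zsmul_mem_Ioc period_pos (J * x + q : ℝ) (M - J * q)
  rw [zsmul_eq_mul] at hlo hhi
  -- The solutions are `J (x, -y) + k (q, p)`; those with `k ≡ 1` modulo `J` are coprime.
  refine ⟨J * x + (1 + J * l) * q, -(J * y) + (1 + J * l) * p,
    ⟨y - l * p, x + l * q, ?_⟩, ?_, ?_, ?_⟩
  · linear_combination hxy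
  · linear_combination J * hxy
  · push_cast
    linarith
  · push_cast
    linarith

theorem exists_isCoprime_abs_sub_mul_le_one {p q J : ℤ} (hpq : IsCoprime p q) (hq : 0 < q)
    (hJ : 0 < J) {M t : ℝ} (hδ : q * t ≤ p) (hlo : J - q ≤ (M - J * q) * (p - q * t))
    (hhi : M * (p - q * t) ≤ J + q) :
    ∃ m n : ℤ, IsCoprime m n ∧ M - J * q < m ∧ m ≤ M ∧ |n - m * t| ≤ 1 := by
  obtain ⟨m, n, hmn, hdet, hm, hmM⟩ := exists_isCoprime_mul_sub_mul_eq hpq hq hJ M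
  refine ⟨m, n, hmn, hm, hmM, ?_⟩
  have hqR : (0 : ℝ) < q := by exact_mod_cast hq
  have hdetR : (p * m - q * n : ℝ) = J := by exact_mod_cast hdet
  have scaled_error : q * (n - m * t) = m * (p - q * t) - J := by linear_combination -hdetR
  have upper : m * (p - q * t) ≤ M * (p - q * t) :=
    mul_le_mul_of_nonneg_right hmM (sub_nonneg.mpr hδ)
  have lower : (M - J * q) * (p - q * t) ≤ m * (p - q * t) :=
    mul_le_mul_of_nonneg_right hm.le (sub_nonneg.mpr hδ)
  have scaled_bound : |(q : ℝ) * (n - m * t)| ≤ q * 1 := by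
    rw [scaled_error, abs_le]
    constructor <;> linarith
  rw [abs_mul, abs_of_pos hqR] at scaled_bound
  exact le_of_mul_le_mul_left scaled_bound hqR

theorem exists_pos_int_near_mul {η M q δ : ℝ} (hη : 0 < η) (hη1 : η ≤ 1)
    (hM : 1 ≤ η ^ 3 * M) (hq : 1 ≤ q) (hqM : q ≤ η * M) (hδ : 0 ≤ δ) (hδM : δ * (η * M) ≤ 1) :
    ∃ J : ℤ, 0 < J ∧ J * q ≤ η * M ∧ J - q ≤ (M - J * q) * δ ∧ M * δ ≤ J + q := by
  have hM0 : 0 < M := by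
    refine pos_of_mul_pos_right (zero_lt_one.trans_le hM) (by positivity)
  rcases le_or_gt (M * δ) q with hMq | hqMδ
  · have hqM' : q ≤ M := hqM.trans (mul_le_of_le_one_left hM0.le hη1)
    have : 0 ≤ (M - q) * δ := mul_nonneg (sub_nonneg.mpr hqM') hδ
    refine ⟨1, one_pos, ?_, ?_, ?_⟩ <;> push_cast <;> linarith
  · have floor_le : (⌊M * δ⌋ : ℝ) ≤ M * δ := Int.floor_le _
    have lt_floor : M * δ < ⌊M * δ⌋ + 1 := Int.lt_floor_add_one _
    have floor_mul_le : ⌊M * δ⌋ * q ≤ η * M := by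
      refine le_of_mul_le_mul_right ?_ (pow_pos hη 2)
      calc ⌊M * δ⌋ * q * η ^ 2 ≤ (M * δ) * (M * δ) * η ^ 2 := by gcongr
        _ = (δ * (η * M)) ^ 2 := by ring
        _ ≤ 1 := pow_le_one₀ (by positivity) hδM
        _ ≤ η * M * η ^ 2 := by linarith
    have drift_le_one : ⌊M * δ⌋ * q * δ ≤ 1 :=
      calc ⌊M * δ⌋ * q * δ ≤ η * M * δ := by gcongr
        _ ≤ 1 := by linarith
    exact ⟨⌊M * δ⌋, Int.floor_pos.mpr (hq.trans hqMδ.le), floor_mul_le, by linarith, by linarith⟩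

theorem exists_isCoprime_dirichlet_approx {Q : ℝ} (hQ : 1 ≤ Q) (t : ℝ) :
    ∃ p q : ℤ, IsCoprime p q ∧ 0 < q ∧ q ≤ Q ∧ |p - q * t| * Q ≤ 1 := by
  obtain ⟨r, hr, hden⟩ := Real.exists_rat_abs_sub_le_and_den_le t (Nat.floor_pos.mpr hQ)
  have den_pos : (0 : ℝ) < r.den := by exact_mod_cast r.den_pos
  have error_eq : |(r.num : ℝ) - r.den * t| = r.den * |t - r| := by
    rw [← abs_of_pos den_pos, ← abs_mul, abs_of_pos den_pos, abs_sub_comm, mul_sub,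
      ← Rat.cast_natCast r.den, ← Rat.cast_mul, Rat.den_mul_eq_num, Rat.cast_intCast]
  refine ⟨r.num, r.den, Rat.isCoprime_num_den r, by exact_mod_cast r.den_pos, ?_, ?_⟩
  · exact_mod_cast (Nat.le_floor_iff (by linarith)).mp hden
  · rw [Int.cast_natCast, error_eq]
    calc r.den * |t - r| * Q ≤ r.den * |t - r| * (⌊Q⌋₊ + 1) := by
          gcongr
          exact (Nat.lt_floor_add_one Q).le
      _ = |t - r| * ((⌊Q⌋₊ + 1) * r.den) := by ring
      _ ≤ 1 := by rwa [← le_div_iff₀ (by positivity)]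

theorem exists_isCoprime_near_slope {η M : ℝ} (hη : 0 < η) (hη1 : η ≤ 1) (hM : 1 ≤ η ^ 3 * M)
    (t : ℝ) :
    ∃ m n : ℤ, IsCoprime m n ∧ (1 - η) * M < m ∧ m ≤ M ∧ |n - m * t| ≤ 1 := by
  have hM0 : 0 < M := pos_of_mul_pos_right (zero_lt_one.trans_le hM) (by positivity)
  have hηM : 1 ≤ η * M :=
    hM.trans (mul_le_mul_of_nonneg_right (pow_le_of_le_one hη.le hη1 three_ne_zero) hM0.le)
  obtain ⟨p, q, hpq, hq, hqM, hδM⟩ := exists_isCoprime_dirichlet_approx hηM t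
  wlog hδ : q * t ≤ p generalizing t p
  · obtain ⟨m, n, hmn, hm, hmM, hn⟩ := this (-t) (-p) hpq.neg_left
      (by push_cast; rwa [mul_neg, ← neg_sub', abs_neg]) (by push_cast; linarith)
    refine ⟨m, -n, hmn.neg_right, hm, hmM, ?_⟩
    rwa [← abs_neg, Int.cast_neg, neg_sub, sub_neg_eq_add, add_comm, ← sub_neg_eq_add, ← mul_neg]
  rw [abs_of_nonneg (sub_nonneg.mpr hδ)] at hδM
  obtain ⟨J, hJ, hJq, hlo, hhi⟩ := exists_pos_int_near_mul hη hη1 hM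
    (by exact_mod_cast hq) hqM (sub_nonneg.mpr hδ) hδM
  obtain ⟨m, n, hmn, hm, hmM, hn⟩ := exists_isCoprime_abs_sub_mul_le_one hpq hq hJ hδ hlo hhi
  exact ⟨m, n, hmn, by linarith, hmM, hn⟩

theorem exists_isCoprime_near_ray {η S c : ℝ} (hη : 0 < η) (hη1 : η ≤ 1) (hc : c ≠ 0)
    (hS : 1 ≤ η ^ 3 * (|c| * S)) (v : ℝ) :
    ∃ (m n : ℤ) (s : ℝ), IsCoprime m n ∧ (1 - η) * S < s ∧ s ≤ S ∧ m = s * c ∧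
      |n - s * v| ≤ 1 := by
  wlog hc0 : 0 < c generalizing c v
  · obtain ⟨m, n, s, hmn, hlo, hhi, hm, hn⟩ := this (neg_ne_zero.mpr hc) (by rwa [abs_neg]) (-v)
      (neg_pos.mpr (lt_of_le_of_ne (not_lt.mp hc0) hc))
    refine ⟨-m, -n, s, hmn.neg_neg, hlo, hhi, by push_cast; linarith, ?_⟩
    rwa [Int.cast_neg, ← abs_neg, neg_sub, sub_neg_eq_add, add_comm, ← sub_neg_eq_add, ← mul_neg]
  rw [abs_of_pos hc0] at hS
  obtain ⟨m, n, hmn, hlo, hhi, hn⟩ := exists_isCoprime_near_slope hη hη1 hS (v / c)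
  refine ⟨m, n, m / c, hmn, ?_, ?_, (div_mul_cancel₀ _ hc).symm, ?_⟩
  · rw [lt_div_iff₀ hc0]
    linarith
  · rw [div_le_iff₀ hc0]
    linarith
  · rwa [div_mul_comm, mul_comm]

section InnerProduct

variable {E : Type*} [NormedAddCommGroup E] [InnerProductSpace ℝ E] {u : E}

theorem sub_norm_sub_smul_le_inner (hu : ‖u‖ = 1) (x : E) (s : ℝ) :
    s - ‖x - s • u‖ ≤ inner ℝ x u := by
  have split : inner ℝ x u = s + inner ℝ (x - s • u) u := by
    simp [inner_sub_left, real_inner_smul_left, hu]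
  have := neg_le_of_abs_le (abs_real_inner_le_norm (x - s • u) u)
  rw [hu, mul_one] at this
  linarith

theorem mul_le_inner_of_norm_sub_smul_le (hu : ‖u‖ = 1) {x : E} {s D R η : ℝ} (hη : 0 ≤ η)
    (hDR : 2 * D ≤ η * R) (hs : (1 - η) * (R - D) ≤ s) (hdist : ‖x - s • u‖ ≤ D) :
    (1 - 2 * η) * R ≤ inner ℝ x u := by
  have := sub_norm_sub_smul_le_inner hu x s
  have := mul_nonneg hη ((norm_nonneg _).trans hdist)
  linarith

theorem norm_le_of_norm_sub_smul_le (hu : ‖u‖ = 1) {x : E} {s D R : ℝ} (hs : 0 ≤ s)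
    (hsR : s ≤ R - D) (hdist : ‖x - s • u‖ ≤ D) : ‖x‖ ≤ R := by
  have := norm_le_norm_sub_add x (s • u)
  rw [norm_smul, hu, mul_one, Real.norm_of_nonneg hs] at this
  linarith

/-- The left-hand side is the distance from `x` to the line spanned by `u`. -/
theorem sqrt_norm_sq_sub_inner_sq_le (hu : ‖u‖ = 1) (x : E) (s : ℝ) :
    √(‖x‖ ^ 2 - inner ℝ x u ^ 2) ≤ ‖x - s • u‖ := by
  refine Real.sqrt_le_iff.mpr ⟨norm_nonneg _, ?_⟩
  rw [norm_sub_sq_real, real_inner_smul_right, norm_smul, hu, mul_one, Real.norm_eq_abs, sq_abs]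
  linarith [sq_nonneg (inner ℝ x u - s)]

end InnerProduct

section Lattice

variable {ι : Type*} [Fintype ι]

theorem gcd_natAbs_eq_one_of_isCoprime {a : ι → ℤ} {i j : ι} (h : IsCoprime (a i) (a j)) :
    Finset.univ.gcd (fun k => (a k).natAbs) = 1 :=
  Nat.eq_one_of_dvd_coprimes (Int.isCoprime_iff_gcd_eq_one.mp h)
    (Finset.gcd_dvd (Finset.mem_univ i)) (Finset.gcd_dvd (Finset.mem_univ j))

theorem exists_primitive_abs_sub_mul_le_one [Nontrivial ι] {η S : ℝ} (hη : 0 < η) (hη1 : η ≤ 1)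
    {u : ι → ℝ} {i₀ : ι} (hu : u i₀ ≠ 0) (hS : 1 ≤ η ^ 3 * (|u i₀| * S)) :
    ∃ (a : ι → ℤ) (s : ℝ), Finset.univ.gcd (fun i => (a i).natAbs) = 1 ∧ (1 - η) * S < s ∧
      s ≤ S ∧ a i₀ = s * u i₀ ∧ ∀ i, |a i - s * u i| ≤ 1 := by
  classical
  obtain ⟨i₁, hi₁⟩ := exists_ne i₀
  obtain ⟨m, n, s, hmn, hlo, hhi, hm, hn⟩ := exists_isCoprime_near_ray hη hη1 hu hS (u i₁)
  let a := Function.update (Function.update (fun i => round (s * u i)) i₁ n) i₀ m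
  have ha₀ : a i₀ = m := Function.update_self ..
  have ha₁ : a i₁ = n := by simp [a, hi₁]
  refine ⟨a, s, gcd_natAbs_eq_one_of_isCoprime (ha₀ ▸ ha₁ ▸ hmn), hlo, hhi, by rw [ha₀, hm],
    fun i => ?_⟩
  rcases eq_or_ne i i₀ with rfl | hi₀
  · simp [ha₀, hm]
  rcases eq_or_ne i i₁ with rfl | hi
  · rwa [ha₁]
  · have ha : a i = round (s * u i) := by simp [a, hi₀, hi]
    rw [ha, abs_sub_comm]
    linarith [abs_sub_round (s * u i)]

theorem exists_norm_le_sqrt_card_mul_abs [Nonempty ι] (x : EuclideanSpace ℝ ι) :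
    ∃ i, ‖x‖ ≤ √(Fintype.card ι) * |x i| := by
  obtain ⟨i, hi⟩ := Finite.exists_max fun i => |x i|
  refine ⟨i, ?_⟩
  rw [EuclideanSpace.norm_eq, ← Real.sqrt_sq_eq_abs, ← Real.sqrt_mul (Nat.cast_nonneg _)]
  apply Real.sqrt_le_sqrt
  calc ∑ j, ‖x j‖ ^ 2 ≤ ∑ _j : ι, x i ^ 2 :=
        Finset.sum_le_sum fun j _ => sq_le_sq.mpr (by simpa using hi j)
    _ = Fintype.card ι * x i ^ 2 := by simp

theorem norm_le_sqrt_card_sub_one {x : EuclideanSpace ℝ ι} {i₀ : ι} (hx₀ : x i₀ = 0)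
    (hx : ∀ i, |x i| ≤ 1) : ‖x‖ ≤ √((Fintype.card ι : ℝ) - 1) := by
  classical
  rw [EuclideanSpace.norm_eq]
  apply Real.sqrt_le_sqrt
  calc ∑ i, ‖x i‖ ^ 2 = ∑ i ∈ Finset.univ.erase i₀, ‖x i‖ ^ 2 :=
        (Finset.sum_erase _ (by simp [hx₀])).symm
    _ ≤ ∑ _i ∈ Finset.univ.erase i₀, 1 :=
        Finset.sum_le_sum fun i _ => pow_le_one₀ (norm_nonneg _) (hx i)
    _ = (Fintype.card ι : ℝ) - 1 := by
        rw [Finset.sum_const, nsmul_one, Finset.cast_card_erase_of_mem (Finset.mem_univ i₀),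
          Finset.card_univ]

theorem exists_primitive_norm_sub_smul_le [Nontrivial ι] {η S : ℝ} (hη : 0 < η) (hη1 : η ≤ 1)
    (hS : √(Fintype.card ι) ≤ η ^ 3 * S) {u : EuclideanSpace ℝ ι} (hu : ‖u‖ = 1) :
    ∃ (a : ι → ℤ) (s : ℝ), Finset.univ.gcd (fun i => (a i).natAbs) = 1 ∧ (1 - η) * S < s ∧
      s ≤ S ∧ ‖WithLp.toLp 2 (fun i => (a i : ℝ)) - s • u‖ ≤ √((Fintype.card ι : ℝ) - 1) := by
  obtain ⟨i₀, hi₀⟩ := exists_norm_le_sqrt_card_mul_abs u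
  rw [hu] at hi₀
  have hu₀ : u i₀ ≠ 0 := by
    intro h
    norm_num [h] at hi₀
  have large : 1 ≤ η ^ 3 * (|u i₀| * S) :=
    calc 1 ≤ √(Fintype.card ι) * |u i₀| := hi₀
      _ ≤ η ^ 3 * S * |u i₀| := by gcongr
      _ = η ^ 3 * (|u i₀| * S) := by ring
  obtain ⟨a, s, hgcd, hlo, hhi, ha₀, ha⟩ := exists_primitive_abs_sub_mul_le_one hη hη1 hu₀ large
  refine ⟨a, s, hgcd, hlo, hhi, norm_le_sqrt_card_sub_one (i₀ := i₀) ?_ ?_⟩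
  · simp [ha₀]
  · simpa using ha

theorem exists_primitive_norm_le_and_mul_le_inner [Nontrivial ι] {η R D : ℝ} (hη : 0 < η)
    (hη1 : η ≤ 1) (hD : √((Fintype.card ι : ℝ) - 1) ≤ D) (hRD : √(Fintype.card ι) / η ^ 3 ≤ R - D)
    (hDR : 2 * D / η ≤ R) {u : EuclideanSpace ℝ ι} (hu : ‖u‖ = 1) :
    ∃ (a : ι → ℤ) (x : EuclideanSpace ℝ ι), (∀ i, x i = a i) ∧
      Finset.univ.gcd (fun i => (a i).natAbs) = 1 ∧ ‖x‖ ≤ R ∧ (1 - 2 * η) * R ≤ inner ℝ x u ∧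
      √(‖x‖ ^ 2 - inner ℝ x u ^ 2) ≤ D := by
  have S_nonneg : 0 ≤ R - D := le_trans (by positivity) hRD
  obtain ⟨a, s, hgcd, hlo, hhi, hdist⟩ :=
    exists_primitive_norm_sub_smul_le hη hη1 ((div_le_iff₀' (by positivity)).mp hRD) hu
  replace hdist := hdist.trans hD
  have s_nonneg : 0 ≤ s := (mul_nonneg (sub_nonneg.mpr hη1) S_nonneg).trans hlo.le
  exact ⟨a, .toLp 2 fun i => (a i : ℝ), fun _ => rfl, hgcd,
    norm_le_of_norm_sub_smul_le hu s_nonneg hhi hdist,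
    mul_le_inner_of_norm_sub_smul_le hu hη.le ((div_le_iff₀' hη).mp hDR) hlo.le hdist,
    (sqrt_norm_sq_sub_inner_sq_le hu _ s).trans hdist⟩

end Lattice

theorem stmt_14_general (ι : Type*) [Fintype ι] [Nontrivial ι] :
    ∀ ε : ℝ, 0 < ε → ∃ R₀ : ℝ, ∀ R : ℝ, R₀ ≤ R →
      ∀ u : ι → ℝ, (∑ i, u i ^ 2) = 1 →
        ∃ a : ι → ℤ,
          a ≠ 0 ∧
          Finset.univ.gcd (fun i => (a i).natAbs) = 1 ∧
          (1 - ε) * R ≤ Real.sqrt (∑ i, ((a i : ℝ)) ^ 2) ∧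
          Real.sqrt (∑ i, ((a i : ℝ)) ^ 2) ≤ R ∧
          0 < (∑ i, (a i : ℝ) * u i) ∧
          Real.sqrt ((∑ i, ((a i : ℝ)) ^ 2) - (∑ i, (a i : ℝ) * u i) ^ 2) ≤
            (1 + ε) * Real.sqrt ((Fintype.card ι : ℝ) - 1) / R * (∑ i, (a i : ℝ) * u i) := by
  intro ε hε
  set D := √((Fintype.card ι : ℝ) - 1)
  obtain ⟨η, hη, hη4, hηε⟩ : ∃ η : ℝ, 0 < η ∧ η ≤ 1 / 4 ∧ η ≤ ε / 4 :=
    ⟨min (1 / 4) (ε / 4), by positivity, min_le_left _ _, min_le_right _ _⟩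
  refine ⟨max (√(Fintype.card ι) / η ^ 3 + D) (2 * D / η), fun R hR u hu => ?_⟩
  obtain ⟨hR₁, hR₂⟩ := max_le_iff.mp hR
  have hR0 : 0 < R := lt_of_lt_of_le (by positivity) hR₁
  have hu1 : ‖WithLp.toLp 2 u‖ = 1 := by simpa [EuclideanSpace.norm_eq] using hu
  obtain ⟨a, x, hx, hgcd, norm_le, inner_ge, hdist⟩ :=
    exists_primitive_norm_le_and_mul_le_inner hη (by linarith) le_rfl
      (le_sub_iff_add_le.mpr hR₁) hR₂ hu1
  have hsq : ∑ i, (a i : ℝ) ^ 2 = ‖x‖ ^ 2 := by simp only [EuclideanSpace.real_norm_sq_eq, hx]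
  have hinner : ∑ i, (a i : ℝ) * u i = inner ℝ x (.toLp 2 u) := by
    simp [PiLp.inner_apply, hx, mul_comm]
  have inner_le : inner ℝ x (.toLp 2 u) ≤ ‖x‖ := by
    simpa [hu1] using real_inner_le_norm x (.toLp 2 u)
  refine ⟨a, ?_⟩
  rw [hsq, hinner, Real.sqrt_sq (norm_nonneg x)]
  set c := inner ℝ x (.toLp 2 u)
  have c_pos : 0 < c := (mul_pos (by linarith) hR0).trans_le inner_ge
  have norm_ge : (1 - ε) * R ≤ ‖x‖ :=
    calc (1 - ε) * R ≤ (1 - 2 * η) * R := by gcongr; linarith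
      _ ≤ ‖x‖ := inner_ge.trans inner_le
  have R_le : R ≤ (1 + ε) * c :=
    calc R ≤ (1 + 4 * η) * ((1 - 2 * η) * R) := by nlinarith [mul_pos hη hR0]
      _ ≤ (1 + 4 * η) * c := by gcongr
      _ ≤ (1 + ε) * c := by gcongr; linarith
  have tan_le : √(‖x‖ ^ 2 - c ^ 2) ≤ (1 + ε) * D / R * c :=
    calc √(‖x‖ ^ 2 - c ^ 2) ≤ D := hdist
      _ ≤ D * ((1 + ε) * c / R) :=
        le_mul_of_one_le_right (Real.sqrt_nonneg _) ((one_le_div₀ hR0).mpr R_le)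
      _ = (1 + ε) * D / R * c := by ring
  have ha : a ≠ 0 := by
    rintro rfl
    simp [← hinner] at c_pos
  exact ⟨ha, hgcd, norm_ge, norm_le, c_pos, tan_le⟩

/-- Primitive integer vectors are angularly dense: for sufficiently large `R` and any unit
direction `u` in the nonnegative orthant, there is a primitive `a ∈ ℤ^d` with
`‖a‖ = (1-o(1))R` (and `‖a‖ ≤ R`) whose angle `θ` with `u` satisfies
`tan θ ≤ (1+o(1))√(d-1)/R`. -/
theorem stmt_14 (d : ℕ) (hd : 2 ≤ d) :
    ∀ ε : ℝ, 0 < ε → ∃ R₀ : ℝ, ∀ R : ℝ, R₀ ≤ R →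
      ∀ u : Fin d → ℝ, (∑ i, u i ^ 2) = 1 → (∀ i, 0 ≤ u i) →
        ∃ a : Fin d → ℤ,
          a ≠ 0 ∧
          Finset.univ.gcd (fun i => (a i).natAbs) = 1 ∧
          (1 - ε) * R ≤ Real.sqrt (∑ i, ((a i : ℝ)) ^ 2) ∧
          Real.sqrt (∑ i, ((a i : ℝ)) ^ 2) ≤ R ∧
          0 < (∑ i, (a i : ℝ) * u i) ∧
          Real.sqrt ((∑ i, ((a i : ℝ)) ^ 2) - (∑ i, (a i : ℝ) * u i) ^ 2) ≤
            (1 + ε) * Real.sqrt ((d : ℝ) - 1) / R * (∑ i, (a i : ℝ) * u i) := by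
  have : Nontrivial (Fin d) := Fin.nontrivial_iff_two_le.mpr hd
  exact fun ε hε => (stmt_14_general (Fin d) ε hε).imp fun _ h R hR u hu _ => by
    simpa only [Fintype.card_fin] using h R hR u hu
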